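/- arXiv:1205.2987 — 2 statements merged into one kernel-verified Lean document; each statement's English description precedes it below -/
import Mathlib

section
/- Let 𝔭̄₀ = {X ∈ 𝔤₀ : X(Eu_{−1} ⊕ … ⊕ Eu_{−j}) ⊆ Eu_{−1} ⊕ … ⊕ Eu_{−j} for all 1 ≤ j ≤ r₀} (the parabolic subalgebra of 𝔤₀ opposite to the stabilizer of the isotropic flag Eu₁ ⊂ … ⊂ Eu₁ ⊕ … ⊕ Eu_{r₀}) and 𝔭_H = {X ∈ 𝔤₀ : X(w₀) = 0 and X(Eu'₁ ⊕ … ⊕ Eu'_j) ⊆ Eu'₁ ⊕ … ⊕ Eu'_j for all 1 ≤ j ≤ r₁} (a parabolic subalgebra of the unitary Lie algebra of the orthogonal complement of w₀). Then 𝔭̄₀ + 𝔭_H = 𝔤₀ as F-vector spaces. (Equivalently, the multiplication map P̄₀ × P_H → G₀ of the corresponding groups is submersive at the identity.) -/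
section SkewHermitian

variable {E V : Type*} [Field E] [AddCommGroup V] [Module E V] {σ : E →+* E}

/-- `X` is skew-hermitian for the sesquilinear form `B`. -/
def IsSkewHermitian (B : V →ₗ[E] V →ₛₗ[σ] E) (X : V →ₗ[E] V) : Prop :=
  ∀ u v, B (X u) v + B u (X v) = 0

theorem IsSkewHermitian.add {B : V →ₗ[E] V →ₛₗ[σ] E} {X Y : V →ₗ[E] V}
    (hX : IsSkewHermitian B X) (hY : IsSkewHermitian B Y) : IsSkewHermitian B (X + Y) := by
  intro u v
  simp only [LinearMap.add_apply, map_add]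
  linear_combination hX u v + hY u v

theorem IsSkewHermitian.sub {B : V →ₗ[E] V →ₛₗ[σ] E} {X Y : V →ₗ[E] V}
    (hX : IsSkewHermitian B X) (hY : IsSkewHermitian B Y) : IsSkewHermitian B (X - Y) := by
  intro u v
  simp only [LinearMap.sub_apply, map_sub]
  linear_combination hX u v - hY u v

/-- The endomorphism `x ↦ B x p • q - B x q • p`. -/
def skewRankTwo (B : V →ₗ[E] V →ₛₗ[σ] E) (p q : V) : V →ₗ[E] V :=
  (B.flip p).smulRight q - (B.flip q).smulRight p

theorem skewRankTwo_apply (B : V →ₗ[E] V →ₛₗ[σ] E) (p q x : V) :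
    skewRankTwo B p q x = B x p • q - B x q • p := by
  simp [skewRankTwo]

theorem isSkewHermitian_skewRankTwo {B : V →ₗ[E] V →ₛₗ[σ] E}
    (hB : ∀ u v, B v u = σ (B u v)) (p q : V) : IsSkewHermitian B (skewRankTwo B p q) := by
  intro u v
  simp only [skewRankTwo_apply, map_sub, map_smul, LinearMap.sub_apply, LinearMap.smul_apply,
    LinearMap.map_smulₛₗ, smul_eq_mul, ← hB]
  ring

/-- If `B w u = B w w` is nonzero and `v` satisfies the condition that skew-hermitian maps impose
on the image of `w`, then some `skewRankTwo B p u` sends `w` to `v`, with `p` in the span of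
`v` and `u`. -/
theorem exists_skewRankTwo_apply_eq [NeZero (2 : E)] {B : V →ₗ[E] V →ₛₗ[σ] E}
    (hB : ∀ u v, B v u = σ (B u v)) {w u v : V} (hw : B w w ≠ 0) (hwu : B w u = B w w)
    (hv : B v w + B w v = 0) :
    ∃ a b : E, skewRankTwo B (a • v + b • u) u w = v := by
  have h2 : (2 : E) ≠ 0 := NeZero.ne 2
  have hσw : σ (B w w) = B w w := (hB w w).symm
  have hσv : σ (B w v) = -B w v := by rw [← hB]; linear_combination hv
  refine ⟨-(B w w)⁻¹, -(B w v) / (2 * B w w * B w w), ?_⟩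
  have key : B w (-(B w w)⁻¹ • v + (-(B w v) / (2 * B w w * B w w)) • u)
      = -(B w v) / (2 * B w w) := by
    simp only [map_add, LinearMap.map_smulₛₗ, map_neg, map_inv₀, map_div₀, map_mul, hσw, hσv,
      map_ofNat, hwu, smul_eq_mul]
    field_simp
    ring
  rw [skewRankTwo_apply, key, hwu]
  match_scalars <;> field_simp
  ring

/-- The vectors `w m - (-1) ^ m • w (m + 1)`; those of even index are the isotropic
vectors `u₋ᵢ`, those of odd index are the `u'ᵢ`. -/
def altVec (E : Type*) {V : Type*} [Field E] [AddCommGroup V] [Module E V] (w : ℕ → V) (m : ℕ) :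
    V :=
  w m - (-1 : E) ^ m • w (m + 1)

/-- `X` is a skew-hermitian map killing `w i` for `i < k` and preserving the flag spanned by
`altVec E w k, altVec E w (k + 2), …`. -/
structure IsFlagStable (B : V →ₗ[E] V →ₛₗ[σ] E) (w : ℕ → V) (l k : ℕ) (X : V →ₗ[E] V) :
    Prop where
  skew : IsSkewHermitian B X
  kills : ∀ i < k, X (w i) = 0
  flag : ∀ t, k + 2 * t + 1 ≤ l → X (altVec E w (k + 2 * t)) ∈
    Submodule.span E ((fun s => altVec E w (k + 2 * s)) '' Set.Iic t)

theorem IsFlagStable.add {B : V →ₗ[E] V →ₛₗ[σ] E} {w : ℕ → V} {l k : ℕ} {X Y : V →ₗ[E] V}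
    (hX : IsFlagStable B w l k X) (hY : IsFlagStable B w l k Y) :
    IsFlagStable B w l k (X + Y) where
  skew := hX.skew.add hY.skew
  kills i hi := by simp [hX.kills i hi, hY.kills i hi]
  flag t ht := add_mem (hX.flag t ht) (hY.flag t ht)

theorem IsFlagStable.of_add_two {B : V →ₗ[E] V →ₛₗ[σ] E} {w : ℕ → V} {l k : ℕ}
    {X : V →ₗ[E] V} (hX : IsFlagStable B w l (k + 2) X) : IsFlagStable B w l k X where
  skew := hX.skew
  kills i hi := hX.kills i (by omega)
  flag t ht := by
    cases t with
    | zero => simp [altVec, hX.kills k (by omega), hX.kills (k + 1) (by omega)]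
    | succ t =>
      have hmem := hX.flag t (by omega)
      rw [show k + 2 + 2 * t = k + 2 * (t + 1) by ring] at hmem
      refine Submodule.span_mono ?_ hmem
      rintro _ ⟨s, hs, rfl⟩
      refine ⟨s + 1, by simpa using hs, ?_⟩
      simp only [show k + 2 + 2 * s = k + 2 * (s + 1) by ring]

theorem IsFlagStable.map_mem_span {B : V →ₗ[E] V →ₛₗ[σ] E} {w : ℕ → V} {l k : ℕ}
    {X : V →ₗ[E] V} (hX : IsFlagStable B w l k X) {f : ℕ → V}
    (hf : ∀ s, f (s + 1) = altVec E w (k + 2 * s)) {j : ℕ} (hj : k + 2 * j ≤ l + 1)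
    {x : V} (hx : x ∈ Submodule.span E (f '' Set.Icc 1 j)) :
    X x ∈ Submodule.span E (f '' Set.Icc 1 j) := by
  suffices Submodule.span E (f '' Set.Icc 1 j) ≤
      (Submodule.span E (f '' Set.Icc 1 j)).comap X from this hx
  rw [Submodule.span_le]
  rintro _ ⟨i, ⟨hi, hij⟩, rfl⟩
  obtain ⟨t, rfl⟩ : ∃ t, i = t + 1 := ⟨i - 1, by omega⟩
  simp only [Submodule.comap_coe, Set.mem_preimage, SetLike.mem_coe]
  rw [hf]
  refine Submodule.span_mono ?_ (hX.flag t (by omega))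
  rintro _ ⟨s, hs, rfl⟩
  simp only [Set.mem_Iic] at hs
  exact ⟨s + 1, ⟨by omega, by omega⟩, hf s⟩

/-- A skew-hermitian map killing `w i` for `i < k` is the sum of one preserving the flag that
starts at `k` and one preserving the flag that starts at `k + 1`. -/
theorem exists_isFlagStable_add [NeZero (2 : E)] {B : V →ₗ[E] V →ₛₗ[σ] E}
    (hB : ∀ u v, B v u = σ (B u v)) {ν : E} (hν : ν ≠ 0) {w : ℕ → V} {l : ℕ}
    (horth : ∀ i ≤ l, ∀ j ≤ l, i ≠ j → B (w i) (w j) = 0)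
    (hself : ∀ i ≤ l, B (w i) (w i) = (-1) ^ i * ν) {k : ℕ} (hk : k ≤ l) {X : V →ₗ[E] V}
    (hX : IsSkewHermitian B X) (hkill : ∀ i < k, X (w i) = 0) :
    ∃ Y Z, IsFlagStable B w l k Y ∧ IsFlagStable B w l (k + 1) Z ∧ X = Y + Z := by
  induction hn : l - k generalizing k X with
  | zero =>
    refine ⟨X, 0, ⟨hX, hkill, fun t ht => by omega⟩, ⟨fun u v => by simp, by simp, by simp⟩, ?_⟩
    simp
  | succ n ih =>
    set u := altVec E w k with hu
    have hsq : ((-1 : E) ^ k) * (-1) ^ k = 1 := by rw [← mul_pow]; simp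
    have hBu (x : V) : B x u = B x (w k) - (-1) ^ k * B x (w (k + 1)) := by
      simp [hu, altVec]
    have hwk : B (w k) (w k) ≠ 0 := by
      rw [hself k hk]; exact mul_ne_zero (pow_ne_zero _ (by simp)) hν
    have hwu : B (w k) u = B (w k) (w k) := by
      rw [hBu, horth k hk (k + 1) (by omega) (by omega)]; simp
    have huu : B u u = 0 := by
      have hwu' : B (w (k + 1)) u = ν := by
        rw [hBu, horth (k + 1) (by omega) k hk (by omega), hself (k + 1) (by omega), pow_succ]
        linear_combination ν * hsq
      have hux : B u u = B (w k) u - (-1) ^ k * B (w (k + 1)) u := by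
        nth_rw 1 [hu]
        simp [altVec]
      rw [hux, hwu, hwu', hself k hk, sub_self]
    have hiu {i : ℕ} (hi : i ≤ l) (hik : i ≠ k) (hik' : i ≠ k + 1) : B (w i) u = 0 := by
      rw [hBu, horth i hi k hk hik, horth i hi (k + 1) (by omega) hik']; simp
    obtain ⟨a, b, hab⟩ := exists_skewRankTwo_apply_eq hB hwk hwu (hX (w k) (w k))
    set p := a • X (w k) + b • u with hp
    have hmem (t : ℕ) :
        u ∈ Submodule.span E ((fun s => altVec E w (k + 2 * s)) '' Set.Iic t) :=
      Submodule.subset_span ⟨0, by simp, by simp [hu]⟩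
    have hT : IsFlagStable B w l k (skewRankTwo B p u) := by
      refine ⟨isSkewHermitian_skewRankTwo hB p u, fun i hi => ?_, fun t ht => ?_⟩
      · have hXi : B (w i) (X (w k)) = 0 := by
          have := hX (w i) (w k)
          rwa [hkill i hi, map_zero, LinearMap.zero_apply, zero_add] at this
        rw [skewRankTwo_apply, hp, map_add, LinearMap.map_smulₛₗ, LinearMap.map_smulₛₗ, hXi,
          hiu (by omega) (by omega) (by omega)]
        simp
      · have hperp : B (altVec E w (k + 2 * t)) u = 0 := by
          rcases Nat.eq_zero_or_pos t with rfl | ht0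
          · simpa using huu
          · simp only [altVec, map_sub, map_smul, LinearMap.sub_apply, LinearMap.smul_apply]
            rw [hiu (by omega) (by omega) (by omega), hiu (by omega) (by omega) (by omega)]
            simp
        rw [skewRankTwo_apply, hperp, zero_smul, sub_zero]
        exact Submodule.smul_mem _ _ (hmem t)
    obtain ⟨Y, Z, hY, hZ, hYZ⟩ := ih (k := k + 1) (X := X - skewRankTwo B p u) (by omega)
      (hX.sub hT.skew) (fun i hi => by
        rcases Nat.lt_succ_iff_lt_or_eq.mp hi with hi | rfl
        · simp [hkill i hi, hT.kills i hi]
        · simp [hab]) (by omega)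
    refine ⟨skewRankTwo B p u + Z, Y, hT.add hZ.of_add_two, hY, ?_⟩
    rw [add_assoc, add_comm Z Y, ← hYZ, add_sub_cancel]

end SkewHermitian


/-- `𝔭̄₀ + 𝔭_H = 𝔤₀`: every skew-hermitian endomorphism of `V₀` is the sum of
a skew-hermitian endomorphism preserving the flag of the spaces `Eu₋₁ ⊕ … ⊕ Eu₋ⱼ`
(`u₋ᵢ = w_{2i−2} − w_{2i−1}`) and a skew-hermitian endomorphism killing `w₀` and
preserving the flag of the spaces `Eu'₁ ⊕ … ⊕ Eu'ⱼ` (`u'ᵢ = w_{2i−1} + w_{2i}`). -/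
theorem stmt_8 (F E : Type*) [Field F] [CharZero F] [Field E] [Algebra F E]
    (hquad : Module.finrank F E = 2)
    (σ : E ≃ₐ[F] E) (hσnt : ∃ x : E, σ x ≠ x)
    (V₀ : Type*) [AddCommGroup V₀] [Module E V₀] [FiniteDimensional E V₀]
    (h : V₀ → V₀ → E)
    (haddl : ∀ u u' v : V₀, h (u + u') v = h u v + h u' v)
    (hsmull : ∀ (a : E) (u v : V₀), h (a • u) v = a * h u v)
    (hconj : ∀ u v : V₀, h v u = σ (h u v))
    (hnd : ∀ u : V₀, (∀ v : V₀, h u v = 0) → u = 0)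
    (ν₀ : F) (hν0 : ν₀ ≠ 0)
    (l : ℕ) (w : ℕ → V₀)
    (horth : ∀ i ≤ l, ∀ j ≤ l, i ≠ j → h (w i) (w j) = 0)
    (hvalw : ∀ i ≤ l, h (w i) (w i) = (-1 : E) ^ i * algebraMap F E ν₀) :
    ∀ X : V₀ → V₀, IsLinearMap E X → (∀ u v : V₀, h (X u) v + h u (X v) = 0) →
      ∃ Y Z : V₀ → V₀,
        IsLinearMap E Y ∧ (∀ u v : V₀, h (Y u) v + h u (Y v) = 0) ∧
        (∀ j : ℕ, 1 ≤ j → j ≤ (l + 1) / 2 →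
          ∀ x ∈ Submodule.span E ((fun i : ℕ => w (2 * i - 2) - w (2 * i - 1)) '' Set.Icc 1 j),
            Y x ∈ Submodule.span E
              ((fun i : ℕ => w (2 * i - 2) - w (2 * i - 1)) '' Set.Icc 1 j)) ∧
        IsLinearMap E Z ∧ (∀ u v : V₀, h (Z u) v + h u (Z v) = 0) ∧ Z (w 0) = 0 ∧
        (∀ j : ℕ, 1 ≤ j → j ≤ l / 2 →
          ∀ x ∈ Submodule.span E ((fun i : ℕ => w (2 * i - 1) + w (2 * i)) '' Set.Icc 1 j),
            Z x ∈ Submodule.span E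
              ((fun i : ℕ => w (2 * i - 1) + w (2 * i)) '' Set.Icc 1 j)) ∧
        X = Y + Z := by
  intro X hXlin hX
  have haddr (u v v' : V₀) : h u (v + v') = h u v + h u v' := by
    rw [hconj (v + v') u, haddl, map_add, ← hconj, ← hconj]
  have hsmulr (a : E) (u v : V₀) : h u (a • v) = σ a * h u v := by
    rw [hconj (a • v) u, hsmull, map_mul, ← hconj]
  let B : V₀ →ₗ[E] V₀ →ₛₗ[(σ : E →+* E)] E :=
    LinearMap.mk₂'ₛₗ (RingHom.id E) (σ : E →+* E) h haddl hsmull haddr hsmulr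
  have : CharZero E := charZero_of_injective_algebraMap (algebraMap F E).injective
  obtain ⟨Y, Z, hY, hZ, hYZ⟩ := exists_isFlagStable_add (B := B) hconj
    (by simpa using hν0 : algebraMap F E ν₀ ≠ 0) horth hvalw (Nat.zero_le l)
    (X := IsLinearMap.mk' X hXlin) hX (by simp)
  refine ⟨Y, Z, Y.isLinear, hY.skew, fun j _ hj x hx => hY.map_mem_span ?_ (by omega) hx,
    Z.isLinear, hZ.skew, hZ.kills 0 (by omega),
    fun j _ hj x hx => hZ.map_mem_span ?_ (by omega) hx, ?_⟩
  · intro s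
    simp [altVec, show 2 * (s + 1) - 2 = 2 * s by omega,
      show 2 * (s + 1) - 1 = 2 * s + 1 by omega]
  · intro s
    simp [altVec, show 2 * (s + 1) = 1 + 2 * s + 1 by omega, pow_add]
  · exact congrArg (fun f : V₀ →ₗ[E] V₀ => (f : V₀ → V₀)) hYZ
end

section
/- Assume l ≥ 1. There exist a compact subset C₂ of G₀ and a constant c₀ ≥ 0 such that for every h ∈ H and every λ ∈ O_E ∖ {0}, there exists h' ∈ h · (a(λ) C₂ a(λ)^{−1} ∩ H) with val_{R₁}(h'|_W) ≥ val_{R₁}(h'(w₁)) − val_E(λ) − c₀. -/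
/-! Common setup for the p-adic statements.  `E` is a nonarchimedean local field of
characteristic zero (a complete, nontrivially normed field with ultrametric norm,
compact unit ball, and discrete valuation `valE` normalized at a uniformizer `πE`),
`σ` is an involution of `E`, and `(V₀, h)` is a hermitian space over `E` relative
to `σ`.  The unitary group `G₀` is realized inside the continuous linear
endomorphisms of `V₀`. -/

section PadSetup

variable (E : Type*) [NontriviallyNormedField E]
variable (V₀ : Type*) [NormedAddCommGroup V₀] [NormedSpace E V₀]

/-- The unitary group `G₀ = U(V₀, h)`. -/
def PadG (h : V₀ → V₀ → E) : Set (V₀ →L[E] V₀) :=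
  {g | Function.Bijective (⇑g) ∧ ∀ u v : V₀, h (g u) (g v) = h u v}

/-- The subgroup `H` of `G₀` fixing `w₀` (the unitary group of `W = (Ew₀)^⊥`). -/
def PadH (h : V₀ → V₀ → E) (w₀ : V₀) : Set (V₀ →L[E] V₀) :=
  {g | g ∈ PadG E V₀ h ∧ g w₀ = w₀}

/-- The anisotropic kernel `V_{an,0}`: the orthogonal complement of the hyperbolic
space `⊕ᵢ (Euᵢ ⊕ Eu₋ᵢ)`, where `u±ᵢ = w_{2i−2} ± w_{2i−1}` for `1 ≤ i ≤ r₀ = ⌊(l+1)/2⌋`. -/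
def PadVan (h : V₀ → V₀ → E) (l : ℕ) (w : ℕ → V₀) : Set V₀ :=
  {v | ∀ i : ℕ, 1 ≤ i → i ≤ (l + 1) / 2 →
    h v (w (2 * i - 2) + w (2 * i - 1)) = 0 ∧ h v (w (2 * i - 2) - w (2 * i - 1)) = 0}

/-- `R_{an,0} = {v ∈ V_{an,0} : val_E h(v,v) ≥ val_E ν₀ − 1}`. -/
def PadRan (h : V₀ → V₀ → E) (l : ℕ) (w : ℕ → V₀) (valE : E → ℤ) (ν₀ : E) : Set V₀ :=
  {v | v ∈ PadVan E V₀ h l w ∧ (v = 0 ∨ valE ν₀ - 1 ≤ valE (h v v))}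

/-- The lattice `R₀ = O_E u₁ + O_E u₋₁ + … + O_E u_{r₀} + O_E u₋_{r₀} + R_{an,0}`. -/
def PadR0 (h : V₀ → V₀ → E) (l : ℕ) (w : ℕ → V₀) (valE : E → ℤ) (ν₀ : E) : Set V₀ :=
  {v | ∃ (a b : ℕ → E) (x : V₀), x ∈ PadRan E V₀ h l w valE ν₀ ∧
    (∀ i, ‖a i‖ ≤ 1) ∧ (∀ i, ‖b i‖ ≤ 1) ∧
    v = (∑ i ∈ Finset.Icc 1 ((l + 1) / 2), a i • (w (2 * i - 2) + w (2 * i - 1))) +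
      (∑ i ∈ Finset.Icc 1 ((l + 1) / 2), b i • (w (2 * i - 2) - w (2 * i - 1))) + x}

end PadSetup

section PadSetup2

variable (E : Type*) [NontriviallyNormedField E]
variable (V₀ : Type*) [NormedAddCommGroup V₀] [NormedSpace E V₀]

/-- The lattice `R₁ = O_E w₁ ⊕ … ⊕ O_E w_l ⊕ R_{♯,H}` in `W`. -/
def PadR1 (l : ℕ) (w : ℕ → V₀) (Rsharp : Set V₀) : Set V₀ :=
  {v | ∃ b : ℕ → E, (∀ i, ‖b i‖ ≤ 1) ∧
    ∃ x ∈ Rsharp, v = (∑ i ∈ Finset.Icc 1 l, b i • w i) + x}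

end PadSetup2

/-- `h` is hermitian relative to `σ`: linear in the first variable, with `h v u = σ (h u v)`. -/
structure IsHermitianForm {E V : Type*} [NontriviallyNormedField E] [NormedAddCommGroup V]
    [NormedSpace E V] (σ : E ≃+* E) (h : V → V → E) : Prop where
  add_left : ∀ u u' v : V, h (u + u') v = h u v + h u' v
  smul_left : ∀ (a : E) (u v : V), h (a • u) v = a * h u v
  conj : ∀ u v : V, h v u = σ (h u v)

namespace IsHermitianForm

variable {E V : Type*} [NontriviallyNormedField E] [NormedAddCommGroup V] [NormedSpace E V]
  {σ : E ≃+* E} {h : V → V → E}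

/-- The linear functional `v ↦ h v y`. -/
def leftLin (hh : IsHermitianForm σ h) (y : V) : V →ₗ[E] E where
  toFun v := h v y
  map_add' u v := hh.add_left u v y
  map_smul' a v := hh.smul_left a v y

lemma zero_left (hh : IsHermitianForm σ h) (v : V) : h 0 v = 0 := (hh.leftLin v).map_zero

lemma sub_left (hh : IsHermitianForm σ h) (u u' v : V) : h (u - u') v = h u v - h u' v :=
  (hh.leftLin v).map_sub u u'

lemma sum_left (hh : IsHermitianForm σ h) {ι : Type*} (s : Finset ι) (f : ι → V) (v : V) :
    h (∑ i ∈ s, f i) v = ∑ i ∈ s, h (f i) v :=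
  map_sum (hh.leftLin v) f s

lemma add_right (hh : IsHermitianForm σ h) (u v v' : V) : h u (v + v') = h u v + h u v' := by
  rw [hh.conj (v + v') u, hh.add_left, map_add, ← hh.conj, ← hh.conj]

lemma sub_right (hh : IsHermitianForm σ h) (u v v' : V) : h u (v - v') = h u v - h u v' := by
  rw [hh.conj (v - v') u, hh.sub_left, map_sub, ← hh.conj, ← hh.conj]

lemma smul_right (hh : IsHermitianForm σ h) (a : E) (u v : V) :
    h u (a • v) = σ a * h u v := by
  rw [hh.conj (a • v) u, hh.smul_left, map_mul, ← hh.conj]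

lemma sum_right (hh : IsHermitianForm σ h) {ι : Type*} (s : Finset ι) (u : V) (f : ι → V) :
    h u (∑ i ∈ s, f i) = ∑ i ∈ s, h u (f i) := by
  rw [hh.conj _ u, hh.sum_left, map_sum]
  exact Finset.sum_congr rfl fun i _ => (hh.conj _ _).symm

lemma eq_zero_symm (hh : IsHermitianForm σ h) {u v : V} (huv : h u v = 0) : h v u = 0 := by
  rw [hh.conj u v, huv, map_zero]

/-- The operator `v ↦ h v z • y - h v y • z`, which is skew-hermitian for `h`. -/
def skewOp (hh : IsHermitianForm σ h) (y z : V) : V →ₗ[E] V :=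
  (hh.leftLin z).smulRight y - (hh.leftLin y).smulRight z

lemma skewOp_apply (hh : IsHermitianForm σ h) (y z v : V) :
    hh.skewOp y z v = h v z • y - h v y • z := rfl

lemma skewOp_skew (hh : IsHermitianForm σ h) (y z u v : V) :
    h (hh.skewOp y z u) v + h u (hh.skewOp y z v) = 0 := by
  simp only [skewOp_apply, hh.sub_left, hh.sub_right, hh.smul_left, hh.smul_right, ← hh.conj]
  ring

/-- An isometry conjugates `skewOp y z` to `skewOp (f y) (f z)`. -/
lemma map_skewOp (hh : IsHermitianForm σ h) (f : V →L[E] V)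
    (hf : ∀ u v, h (f u) (f v) = h u v) (y z v : V) :
    f (hh.skewOp y z v) = hh.skewOp (f y) (f z) (f v) := by
  simp [skewOp_apply, hf]

/-- The Cayley transform of a skew-hermitian operator is an isometry. -/
lemma cayley_isometry (hh : IsHermitianForm σ h) {X f : V → V}
    (hX : ∀ u v, h (X u) v + h u (X v) = 0) (hsurj : ∀ v, ∃ u, u - X u = v)
    (hf : ∀ u, f (u - X u) = u + X u) (u v : V) : h (f u) (f v) = h u v := by
  obtain ⟨u, rfl⟩ := hsurj u
  obtain ⟨v, rfl⟩ := hsurj v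
  rw [hf, hf]
  simp only [hh.add_left, hh.sub_left, hh.add_right, hh.sub_right]
  linear_combination 2 * hX u v

lemma norm_skewOp_le (hh : IsHermitianForm σ h) {B : ℝ}
    (hB : ∀ u v, ‖h u v‖ ≤ B * ‖u‖ * ‖v‖) (y z v : V) :
    ‖hh.skewOp y z v‖ ≤ 2 * B * ‖y‖ * ‖z‖ * ‖v‖ := by
  rw [skewOp_apply]
  refine (norm_sub_le _ _).trans ?_
  rw [norm_smul, norm_smul]
  have h1 := mul_le_mul_of_nonneg_right (hB v z) (norm_nonneg y)
  have h2 := mul_le_mul_of_nonneg_right (hB v y) (norm_nonneg z)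
  linarith

variable [CompleteSpace E] [FiniteDimensional E V]

lemma continuous_left (hh : IsHermitianForm σ h) (y : V) : Continuous fun v => h v y :=
  (hh.leftLin y).continuous_of_finiteDimensional

/-- A hermitian form on a finite-dimensional space is bounded. -/
lemma exists_bound (hh : IsHermitianForm σ h) (hσ : ∀ x, ‖σ x‖ = ‖x‖) :
    ∃ B : ℝ, 0 ≤ B ∧ ∀ u v, ‖h u v‖ ≤ B * ‖u‖ * ‖v‖ := by
  let b := Module.finBasis E V
  let c := fun i => LinearMap.toContinuousLinearMap (b.coord i)
  let L := fun i => LinearMap.toContinuousLinearMap (hh.leftLin (b i))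
  refine ⟨∑ i, ‖c i‖ * ‖L i‖, by positivity, fun u v => ?_⟩
  have hv : h u v = ∑ i, σ (c i v) * L i u := by
    conv_lhs => rw [← b.sum_repr v, hh.sum_right]
    exact Finset.sum_congr rfl fun i _ => hh.smul_right _ _ _
  rw [hv, Finset.sum_mul, Finset.sum_mul]
  refine (norm_sum_le _ _).trans (Finset.sum_le_sum fun i _ => ?_)
  rw [norm_mul, hσ]
  calc ‖c i v‖ * ‖L i u‖ ≤ (‖c i‖ * ‖v‖) * (‖L i‖ * ‖u‖) := by
        gcongr <;> exact ContinuousLinearMap.le_opNorm _ _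
    _ = ‖c i‖ * ‖L i‖ * ‖u‖ * ‖v‖ := by ring

end IsHermitianForm

section FiniteDimensional

variable {E V : Type*} [NontriviallyNormedField E] [NormedAddCommGroup V] [NormedSpace E V]

lemma norm_le_two_mul_norm_sub {X : V → V} (hX : ∀ v, ‖X v‖ ≤ ‖v‖ / 2) (u : V) :
    ‖u‖ ≤ 2 * ‖u - X u‖ := by
  have := norm_sub_norm_le u (X u)
  linarith [hX u]

lemma surjective_sub_of_norm_le [FiniteDimensional E V] {X : V →ₗ[E] V}
    (hX : ∀ v, ‖X v‖ ≤ ‖v‖ / 2) (v : V) : ∃ u, u - X u = v := by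
  have hinj : Function.Injective (LinearMap.id - X : V →ₗ[E] V) := by
    rw [injective_iff_map_eq_zero]
    intro u hu
    have h1 := norm_le_two_mul_norm_sub hX u
    have h2 : u - X u = 0 := hu
    rw [h2, norm_zero, mul_zero] at h1
    exact norm_le_zero_iff.mp h1
  exact LinearMap.injective_iff_surjective.mp hinj v

/-- The Cayley transform `(1 + X) (1 - X)⁻¹` of a small operator exists. -/
lemma exists_cayley [CompleteSpace E] [FiniteDimensional E V] {X : V →ₗ[E] V}
    (hX : ∀ v, ‖X v‖ ≤ ‖v‖ / 2) : ∃ f : V →L[E] V, ∀ u, f (u - X u) = u + X u := by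
  have hinj : Function.Injective (LinearMap.id - X : V →ₗ[E] V) :=
    LinearMap.injective_iff_surjective.mpr (surjective_sub_of_norm_le hX)
  let L := LinearEquiv.ofInjectiveEndo _ hinj
  refine ⟨LinearMap.toContinuousLinearMap ((LinearMap.id + X) ∘ₗ L.symm.toLinearMap), fun u => ?_⟩
  have hL : L.symm (u - X u) = u := L.symm_apply_eq.mpr rfl
  simp [hL]

lemma norm_cayley_le [FiniteDimensional E V] {X : V →ₗ[E] V}
    (hX : ∀ v, ‖X v‖ ≤ ‖v‖ / 2) {f : V → V} (hf : ∀ u, f (u - X u) = u + X u) (v : V) :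
    ‖f v‖ ≤ 3 * ‖v‖ := by
  obtain ⟨u, rfl⟩ := surjective_sub_of_norm_le hX v
  rw [hf]
  linarith [norm_add_le u (X u), hX u, norm_le_two_mul_norm_sub hX u]

/-- A set stable under addition and multiplication by scalars of norm at most one which absorbs
every vector of a subspace contains a neighbourhood of zero in that subspace. -/
lemma exists_ball_subset_of_absorbing [CompleteSpace E] [FiniteDimensional E V] (S : Submodule E V)
    {R : Set V} (hadd : ∀ x ∈ R, ∀ y ∈ R, x + y ∈ R)
    (hsmul : ∀ c : E, ‖c‖ ≤ 1 → ∀ x ∈ R, c • x ∈ R)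
    (habs : ∀ v ∈ S, ∃ c : E, c ≠ 0 ∧ c • v ∈ R) :
    ∃ ε > 0, ∀ x ∈ S, ‖x‖ ≤ ε → x ∈ R := by
  have hzero : (0 : V) ∈ R := by
    obtain ⟨c, -, hc⟩ := habs 0 S.zero_mem
    simpa using hc
  let b := Module.finBasis E S
  choose c hc0 hc using fun i => habs (b i) (b i).2
  let L := fun i => LinearMap.toContinuousLinearMap (b.coord i)
  have hev : ∀ᶠ x : S in nhds 0, ∀ i, ‖L i x‖ ≤ ‖c i‖ := by
    rw [Filter.eventually_all]
    intro i
    have ht : Filter.Tendsto (fun x => ‖L i x‖) (nhds 0) (nhds 0) := by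
      simpa using ((L i).continuous.norm.tendsto 0)
    exact (ht.eventually (gt_mem_nhds (norm_pos_iff.mpr (hc0 i)))).mono fun _ hx => le_of_lt hx
  obtain ⟨ε, hε, hball⟩ := Metric.eventually_nhds_iff.mp hev
  refine ⟨ε / 2, by positivity, fun x hx hxε => ?_⟩
  have hL := hball (y := ⟨x, hx⟩) (by rw [dist_zero_right]; change ‖x‖ < ε; linarith)
  have hx' : x = ∑ i, (L i ⟨x, hx⟩ / c i) • (c i • (b i : V)) := by
    conv_lhs => rw [show x = ((⟨x, hx⟩ : S) : V) from rfl, ← b.sum_repr ⟨x, hx⟩]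
    rw [Submodule.coe_sum]
    refine Finset.sum_congr rfl fun i _ => ?_
    rw [smul_smul, div_mul_cancel₀ _ (hc0 i)]
    rfl
  rw [hx']
  refine Finset.sum_induction _ (· ∈ R) (fun a b ha hb => hadd a ha b hb) hzero fun i _ => ?_
  refine hsmul _ ?_ _ (hc i)
  rw [norm_div]
  exact div_le_one_of_le₀ (hL i) (norm_nonneg _)

/-- On a small ball of a subspace a linear map takes a value which controls the map on the
whole subspace. -/
lemma exists_ball_controls [ProperSpace V] (S : Submodule E V) (hS : IsClosed (S : Set V))
    {δ : ℝ} (hδ : 0 < δ) {c : E} (hc : 1 < ‖c‖) (g : V →L[E] V) :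
    ∃ y ∈ S, ‖y‖ ≤ δ ∧ ∀ x ∈ S, ‖g x‖ ≤ δ⁻¹ * ‖c‖ * ‖x‖ * ‖g y‖ := by
  have hcomp : IsCompact (Metric.closedBall (0 : V) δ ∩ S) :=
    (isCompact_closedBall 0 δ).inter_right hS
  obtain ⟨y, ⟨hyδ, hyS⟩, hmax⟩ := hcomp.exists_isMaxOn (f := fun x => ‖g x‖)
    ⟨0, by simp [hδ.le], S.zero_mem⟩ g.continuous.norm.continuousOn
  refine ⟨y, hyS, by simpa using hyδ, fun x hx => ?_⟩
  rcases eq_or_ne x 0 with rfl | hx0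
  · simp
  obtain ⟨d, hd0, hdδ, -, hd⟩ := rescale_to_shell hc hδ hx0
  have h1 : ‖g (d • x)‖ ≤ ‖g y‖ := hmax ⟨by simpa using hdδ.le, S.smul_mem d hx⟩
  have h2 : ‖g x‖ = ‖d‖⁻¹ * ‖g (d • x)‖ := by
    rw [map_smul, norm_smul, inv_mul_cancel_left₀ (norm_ne_zero_iff.mpr hd0)]
  rw [h2]
  gcongr

end FiniteDimensional

section UnitaryGroup

variable {E V : Type*} [NontriviallyNormedField E] [NormedAddCommGroup V] [NormedSpace E V]
  {σ : E ≃+* E} {h : V → V → E}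

/-- On a finite-dimensional nondegenerate space every isometry is bijective. -/
lemma mem_PadG_of_isometry [FiniteDimensional E V] (hh : IsHermitianForm σ h)
    (hnd : ∀ u, (∀ v, h u v = 0) → u = 0) {f : V →L[E] V}
    (hf : ∀ u v, h (f u) (f v) = h u v) : f ∈ PadG E V h := by
  have hinj : Function.Injective (f : V →ₗ[E] V) := by
    rw [injective_iff_map_eq_zero]
    intro u hu
    have hu' : f u = 0 := hu
    exact hnd u fun v => by rw [← hf, hu', hh.zero_left]
  exact ⟨⟨hinj, LinearMap.injective_iff_surjective.mp hinj⟩, hf⟩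

lemma comp_mem_PadG {f g : V →L[E] V} (hf : f ∈ PadG E V h) (hg : g ∈ PadG E V h) :
    f.comp g ∈ PadG E V h :=
  ⟨hf.1.comp hg.1, fun u v => (hf.2 _ _).trans (hg.2 u v)⟩

/-- Norm-bounded subsets of the unitary group are relatively compact in it. -/
lemma isCompact_PadG_inter_closedBall [CompleteSpace E] [FiniteDimensional E V]
    [ProperSpace (V →L[E] V)] (hh : IsHermitianForm σ h) (hσ : ∀ x, ‖σ x‖ = ‖x‖)
    (hnd : ∀ u, (∀ v, h u v = 0) → u = 0) (M : ℝ) :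
    IsCompact (PadG E V h ∩ Metric.closedBall 0 M) := by
  obtain ⟨B, hB0, hB⟩ := hh.exists_bound hσ
  have hcont : Continuous fun p : V × V => h p.1 p.2 := by
    rw [continuous_iff_continuousAt]
    rintro ⟨u, v⟩
    have hlim : Filter.Tendsto (fun p : V × V => B * ‖p.1‖ * ‖p.2 - v‖ + ‖h p.1 v - h u v‖)
        (nhds (u, v)) (nhds 0) := by
      have hc : Continuous fun p : V × V => B * ‖p.1‖ * ‖p.2 - v‖ + ‖h p.1 v - h u v‖ := by
        have := (hh.continuous_left v).comp (continuous_fst (X := V) (Y := V))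
        exact ((continuous_const.mul continuous_fst.norm).mul
          (continuous_snd.sub continuous_const).norm).add (this.sub continuous_const).norm
      simpa using hc.tendsto (u, v)
    rw [ContinuousAt, tendsto_iff_norm_sub_tendsto_zero]
    refine squeeze_zero (fun _ => norm_nonneg _) (fun p => ?_) hlim
    have hsplit : h p.1 p.2 - h u v = h p.1 (p.2 - v) + (h p.1 v - h u v) := by
      rw [hh.sub_right]; ring
    rw [hsplit]
    exact (norm_add_le _ _).trans (by gcongr; exact hB _ _)
  have hclosed : IsClosed (PadG E V h) := by
    have heq : PadG E V h = ⋂ u, ⋂ v, {f : V →L[E] V | h (f u) (f v) = h u v} := by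
      ext f
      simp only [Set.mem_iInter, Set.mem_ofPred_eq]
      exact ⟨fun hf => hf.2, fun hf => mem_PadG_of_isometry hh hnd hf⟩
    rw [heq]
    refine isClosed_iInter fun u => isClosed_iInter fun v => isClosed_eq ?_ continuous_const
    exact hcont.comp (f := fun f : V →L[E] V => (f u, f v)) (by fun_prop)
  exact (isCompact_closedBall 0 M).inter_left hclosed

/-- The Cayley transform of `skewOp y z`, conjugated by an isometry `A` fixing `y` and taking `z`
to a multiple of `w₁`. -/
lemma exists_conj_cayley [CompleteSpace E] [FiniteDimensional E V] (hh : IsHermitianForm σ h)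
    (hnd : ∀ u, (∀ v, h u v = 0) → u = 0)
    {A A' : V →L[E] V} (hA : A ∈ PadG E V h) (hA' : A' ∈ PadG E V h)
    (hAA' : ∀ v, A (A' v) = v) {w₀ w₁ y z : V} {ν lamb : E}
    (h01 : h w₀ w₁ = 0) (h11 : h w₁ w₁ = -ν) (hy0 : h y w₀ = 0) (hy1 : h y w₁ = 0)
    (hAy : A y = y) (hAz : A z = lamb • w₁)
    (hX : ∀ v, ‖hh.skewOp y z v‖ ≤ ‖v‖ / 2)
    (hX' : ∀ v, ‖hh.skewOp y (lamb • w₁) v‖ ≤ ‖v‖ / 2) :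
    ∃ γ ∈ PadG E V h ∩ Metric.closedBall 0 3,
      A.comp (γ.comp A') ∈ PadH E V h w₀ ∧ (∀ v, ‖A (γ (A' v))‖ ≤ 3 * ‖v‖) ∧
      (1 - ν * lamb * σ lamb * h y y) • A (γ (A' w₁)) =
        (1 + ν * lamb * σ lamb * h y y) • w₁ - (2 * ν * σ lamb) • y := by
  obtain ⟨γ, hγ⟩ := exists_cayley hX
  have hγG : γ ∈ PadG E V h := mem_PadG_of_isometry hh hnd
    (hh.cayley_isometry (hh.skewOp_skew y z) (surjective_sub_of_norm_le hX) hγ)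
  have hA'A : ∀ v, A' (A v) = v := fun v => hA.1.1 (hAA' (A v))
  have hk : ∀ u, A (γ (A' (u - hh.skewOp y (lamb • w₁) u))) =
      u + hh.skewOp y (lamb • w₁) u := by
    intro u
    have h1 : hh.skewOp y (lamb • w₁) u = A (hh.skewOp y z (A' u)) := by
      rw [hh.map_skewOp A hA.2, hAy, hAz, hAA']
    rw [h1, map_sub, hA'A, hγ, map_add, hAA']
  refine ⟨γ, ⟨hγG, ?_⟩, ⟨comp_mem_PadG hA (comp_mem_PadG hγG hA'), ?_⟩, ?_, ?_⟩
  · rw [mem_closedBall_zero_iff]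
    exact γ.opNorm_le_bound (by norm_num) (norm_cayley_le hX hγ)
  · have := hk w₀
    rw [hh.skewOp_apply, hh.smul_right, h01, hh.eq_zero_symm hy0] at this
    simpa using this
  · exact norm_cayley_le hX' (f := fun v => A (γ (A' v))) hk
  · have e1 := hk w₁
    have e2 := hk y
    rw [hh.skewOp_apply, hh.smul_right, h11, hh.eq_zero_symm hy1] at e1
    rw [hh.skewOp_apply, hh.smul_right, hy1] at e2
    simp only [mul_zero, zero_smul, sub_zero, zero_sub, map_sub, map_smul, map_neg] at e1 e2
    linear_combination (norm := module) e1 - (ν * σ lamb) • e2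

end UnitaryGroup

section Lattice

variable {E V : Type*} [NontriviallyNormedField E] [NormedAddCommGroup V] [NormedSpace E V]
  {σ : E ≃+* E} {h : V → V → E} {l : ℕ} {w : ℕ → V} {R : Set V}

lemma exists_norm_le_of_mem_PadR1 (hR : ∃ C : ℝ, ∀ x ∈ R, ‖x‖ ≤ C) :
    ∃ C : ℝ, 0 ≤ C ∧ ∀ x ∈ PadR1 E V l w R, ‖x‖ ≤ C := by
  obtain ⟨C, hC⟩ := hR
  refine ⟨∑ i ∈ Finset.Icc 1 l, ‖w i‖ + |C|, by positivity, ?_⟩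
  rintro _ ⟨b, hb, x, hx, rfl⟩
  refine (norm_add_le _ _).trans (add_le_add ?_ ((hC x hx).trans (le_abs_self C)))
  refine (norm_sum_le _ _).trans (Finset.sum_le_sum fun i _ => ?_)
  rw [norm_smul]
  exact mul_le_of_le_one_left (norm_nonneg _) (hb i)

/-- `R₁` contains a neighbourhood of zero in `W = w₀^⊥`. -/
lemma exists_ball_subset_PadR1 [CompleteSpace E] [FiniteDimensional E V]
    (hh : IsHermitianForm σ h)
    (horth : ∀ i ≤ l, ∀ j ≤ l, i ≠ j → h (w i) (w j) = 0)
    (hne : ∀ i ≤ l, h (w i) (w i) ≠ 0)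
    (hadd : ∀ x ∈ R, ∀ y ∈ R, x + y ∈ R)
    (hsmul : ∀ c : E, ‖c‖ ≤ 1 → ∀ x ∈ R, c • x ∈ R)
    (habs : ∀ v : V, h v (w 0) = 0 → (∀ i : ℕ, 1 ≤ i → i ≤ l → h v (w i) = 0) →
      ∃ c : E, c ≠ 0 ∧ c • v ∈ R) :
    ∃ ε > 0, ∀ x, h x (w 0) = 0 → ‖x‖ ≤ ε → x ∈ PadR1 E V l w R := by
  let S : Submodule E V := ⨅ i ∈ Finset.Icc 0 l, LinearMap.ker (hh.leftLin (w i))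
  have hS : ∀ x, x ∈ S ↔ ∀ i ≤ l, h x (w i) = 0 := by
    intro x
    simp [S, IsHermitianForm.leftLin]
  obtain ⟨ε, hε, hball⟩ := exists_ball_subset_of_absorbing S hadd hsmul fun v hv =>
    habs v ((hS v).mp hv 0 (Nat.zero_le l)) fun i _ hi => (hS v).mp hv i hi
  let b : V → ℕ → E := fun x i => h x (w i) / h (w i) (w i)
  have hb : ∀ i, Continuous fun x => b x i := fun i => (hh.continuous_left (w i)).div_const _
  have hb0 : ∀ i, b 0 i = 0 := fun i => by simp [b, hh.zero_left]
  have hev1 : ∀ᶠ x in nhds (0 : V), ∀ i ∈ Finset.Icc 1 l, ‖b x i‖ ≤ 1 := by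
    rw [Filter.eventually_all_finset]
    intro i _
    have ht := (hb i).norm.tendsto 0
    rw [hb0, norm_zero] at ht
    exact (ht.eventually (gt_mem_nhds one_pos)).mono fun _ hx => le_of_lt hx
  have hev2 : ∀ᶠ x in nhds (0 : V), ‖x - ∑ i ∈ Finset.Icc 1 l, b x i • w i‖ ≤ ε := by
    have hc : Continuous fun x => ‖x - ∑ i ∈ Finset.Icc 1 l, b x i • w i‖ := by fun_prop
    have ht := hc.tendsto 0
    simp only [hb0, zero_smul, Finset.sum_const_zero, sub_zero, norm_zero] at ht
    exact (ht.eventually (gt_mem_nhds hε)).mono fun _ hx => le_of_lt hx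
  obtain ⟨η, hη, hev⟩ := Metric.eventually_nhds_iff.mp (hev1.and hev2)
  refine ⟨η / 2, by positivity, fun x hx0 hxη => ?_⟩
  obtain ⟨hbx, hxε⟩ := hev (y := x) (by rw [dist_zero_right]; linarith)
  have hmem : x - ∑ i ∈ Finset.Icc 1 l, b x i • w i ∈ S := by
    rw [hS]
    intro j hj
    rw [hh.sub_left, hh.sum_left]
    simp only [hh.smul_left]
    rcases Nat.eq_zero_or_pos j with rfl | hj0
    · rw [hx0, Finset.sum_eq_zero, sub_zero]
      intro i hi
      rw [Finset.mem_Icc] at hi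
      rw [horth i hi.2 0 hj (by omega), mul_zero]
    · rw [Finset.sum_eq_single_of_mem j (Finset.mem_Icc.mpr ⟨hj0, hj⟩), sub_eq_zero]
      · exact (div_mul_cancel₀ _ (hne j hj)).symm
      · intro i hi hij
        rw [horth i (Finset.mem_Icc.mp hi).2 j hj hij, mul_zero]
  refine ⟨fun i => if i ∈ Finset.Icc 1 l then b x i else 0, fun i => ?_, _, hball _ hmem hxε, ?_⟩
  · dsimp only
    split_ifs with hi
    · exact hbx i hi
    · simp
  · rw [Finset.sum_congr rfl (g := fun i => b x i • w i) fun i hi => by simp only [if_pos hi]]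
    abel

end Lattice

section Control

variable {E V : Type*} [NontriviallyNormedField E] [NormedAddCommGroup V] [NormedSpace E V]
  {σ : E ≃+* E} {h : V → V → E}

/-- On `w₀^⊥`, a linear map is controlled by its values at `w₁` and at one short vector orthogonal
to `w₀` and `w₁`. -/
lemma exists_orthogonal_controls [CompleteSpace E] [FiniteDimensional E V] [ProperSpace V]
    (hh : IsHermitianForm σ h) {B : ℝ} (hB0 : 0 ≤ B) (hB : ∀ u v, ‖h u v‖ ≤ B * ‖u‖ * ‖v‖)
    {w₀ w₁ : V} (h10 : h w₁ w₀ = 0) (h11 : h w₁ w₁ ≠ 0) {δ : ℝ} (hδ : 0 < δ) :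
    ∃ K : ℝ, 0 ≤ K ∧ ∀ g : V →L[E] V, ∃ y, h y w₀ = 0 ∧ h y w₁ = 0 ∧ ‖y‖ ≤ δ ∧
      ∀ x, h x w₀ = 0 → ∀ M, ‖g w₁‖ ≤ M → ‖g y‖ ≤ M → ‖g x‖ ≤ K * ‖x‖ * M := by
  obtain ⟨c, hc⟩ := NormedField.exists_one_lt_norm E
  let S : Submodule E V := LinearMap.ker (hh.leftLin w₀) ⊓ LinearMap.ker (hh.leftLin w₁)
  let a : ℝ := B * ‖w₁‖ / ‖h w₁ w₁‖
  refine ⟨a + δ⁻¹ * ‖c‖ * (1 + a * ‖w₁‖), by positivity, fun g => ?_⟩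
  obtain ⟨y, hyS, hyδ, hy⟩ :=
    exists_ball_controls S S.closed_of_finiteDimensional hδ hc g
  refine ⟨y, hyS.1, hyS.2, hyδ, fun x hx M hM1 hM2 => ?_⟩
  have hM : 0 ≤ M := (norm_nonneg _).trans hM1
  let α := h x w₁ / h w₁ w₁
  have hα : ‖α‖ ≤ a * ‖x‖ := by
    rw [norm_div, div_le_iff₀ (norm_pos_iff.mpr h11)]
    refine (hB x w₁).trans (le_of_eq ?_)
    simp only [a]
    field_simp [norm_ne_zero_iff.mpr h11]
  have hmem : x - α • w₁ ∈ S := by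
    constructor
    · change h (x - α • w₁) w₀ = 0
      rw [hh.sub_left, hh.smul_left, hx, h10, mul_zero, sub_zero]
    · change h (x - α • w₁) w₁ = 0
      rw [hh.sub_left, hh.smul_left, div_mul_cancel₀ _ h11, sub_self]
  have hnorm : ‖x - α • w₁‖ ≤ (1 + a * ‖w₁‖) * ‖x‖ := by
    refine (norm_sub_le _ _).trans ?_
    rw [norm_smul]
    nlinarith [mul_le_mul_of_nonneg_right hα (norm_nonneg w₁)]
  calc ‖g x‖ = ‖α • g w₁ + g (x - α • w₁)‖ := by rw [map_sub, map_smul, add_sub_cancel]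
    _ ≤ ‖α‖ * ‖g w₁‖ + ‖g (x - α • w₁)‖ := by
        rw [← norm_smul]; exact norm_add_le _ _
    _ ≤ (a * ‖x‖) * M + δ⁻¹ * ‖c‖ * ((1 + a * ‖w₁‖) * ‖x‖) * M := by
        refine add_le_add (mul_le_mul hα hM1 (norm_nonneg _) (by positivity))
          ((hy _ hmem).trans ?_)
        gcongr
    _ = (a + δ⁻¹ * ‖c‖ * (1 + a * ‖w₁‖)) * ‖x‖ * M := by ring

/-- There is a bounded part of the unitary group whose conjugates by `A lamb` suffice to make the
image of `w₁` large relative to the operator norm on `w₀^⊥`, up to a factor `‖lamb‖`. -/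
lemma exists_conj_controls [CompleteSpace E] [CharZero E] [FiniteDimensional E V] [ProperSpace V]
    (hh : IsHermitianForm σ h) (hσ : ∀ x, ‖σ x‖ = ‖x‖)
    (hnd : ∀ u, (∀ v, h u v = 0) → u = 0) {w₀ w₁ : V} {ν : E} (hν : ν ≠ 0)
    (h00 : h w₀ w₀ = ν) (h11 : h w₁ w₁ = -ν) (h01 : h w₀ w₁ = 0)
    {A : E → (V →L[E] V)} (hA : ∀ lamb, lamb ≠ 0 → A lamb ∈ PadG E V h)
    (hA1 : ∀ lamb, lamb ≠ 0 → A lamb (w₀ + w₁) = lamb • (w₀ + w₁))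
    (hA2 : ∀ lamb, lamb ≠ 0 → A lamb (w₀ - w₁) = (σ lamb)⁻¹ • (w₀ - w₁))
    (hA3 : ∀ lamb, lamb ≠ 0 → ∀ v, h v (w₀ + w₁) = 0 → h v (w₀ - w₁) = 0 → A lamb v = v) :
    ∃ K : ℝ, 0 ≤ K ∧ ∀ (g : V →L[E] V) (lamb : E), lamb ≠ 0 → ‖lamb‖ ≤ 1 →
      ∃ γ ∈ PadG E V h ∩ Metric.closedBall 0 3,
        (A lamb).comp (γ.comp (A lamb⁻¹)) ∈ PadH E V h w₀ ∧
        (∀ v, ‖A lamb (γ (A lamb⁻¹ v))‖ ≤ 3 * ‖v‖) ∧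
        ∀ x, h x w₀ = 0 → ‖lamb‖ * ‖g x‖ ≤ K * ‖x‖ * ‖g (A lamb (γ (A lamb⁻¹ w₁)))‖ := by
  obtain ⟨B, hB0, hB⟩ := hh.exists_bound hσ
  have h10 := hh.eq_zero_symm h01
  have hfix : ∀ lamb, lamb ≠ 0 → ∀ v, h v w₀ = 0 → h v w₁ = 0 → A lamb v = v := by
    intro lamb hl v hv0 hv1
    exact hA3 lamb hl v (by rw [hh.add_right, hv0, hv1, add_zero])
      (by rw [hh.sub_right, hv0, hv1, sub_zero])
  have hinv : ∀ lamb, lamb ≠ 0 → ∀ v, A lamb (A lamb⁻¹ v) = v := by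
    intro lamb hl v
    have hl' := inv_ne_zero hl
    have hσl : σ lamb ≠ 0 := (map_ne_zero σ).mpr hl
    have e1 : A lamb (A lamb⁻¹ (w₀ + w₁)) = w₀ + w₁ := by
      rw [hA1 _ hl', map_smul, hA1 _ hl, inv_smul_smul₀ hl]
    have e2 : A lamb (A lamb⁻¹ (w₀ - w₁)) = w₀ - w₁ := by
      rw [hA2 _ hl', map_smul, hA2 _ hl, map_inv₀, inv_inv, smul_inv_smul₀ hσl]
    have e3 : A lamb (A lamb⁻¹ (v - (h v w₀ / ν) • w₀ + (h v w₁ / ν) • w₁)) =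
        v - (h v w₀ / ν) • w₀ + (h v w₁ / ν) • w₁ := by
      have f0 : h (v - (h v w₀ / ν) • w₀ + (h v w₁ / ν) • w₁) w₀ = 0 := by
        rw [hh.add_left, hh.sub_left, hh.smul_left, hh.smul_left, h00, h10]
        field_simp
        ring
      have f1 : h (v - (h v w₀ / ν) • w₀ + (h v w₁ / ν) • w₁) w₁ = 0 := by
        rw [hh.add_left, hh.sub_left, hh.smul_left, hh.smul_left, h01, h11]
        field_simp
        ring
      rw [hfix _ hl' _ f0 f1, hfix _ hl _ f0 f1]
    simp only [map_add, map_sub, map_smul] at e1 e2 e3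
    linear_combination (norm := module) e3 + ((h v w₀ / ν - h v w₁ / ν) / 2) • e1 +
      ((h v w₀ / ν + h v w₁ / ν) / 2) • e2
  let Z : ℝ := ‖w₁‖ + ‖(2⁻¹ : E)‖ * ‖w₀ + w₁‖ + ‖(2⁻¹ : E)‖ * ‖w₀ - w₁‖
  have hZ : 0 ≤ Z := by positivity
  let δ : ℝ := (4 * B * Z + ‖ν‖ * B + 1)⁻¹
  have hδ : 0 < δ := by positivity
  have hδ' : δ * (4 * B * Z + ‖ν‖ * B + 1) = 1 := inv_mul_cancel₀ (by positivity)
  have hδZ : 2 * B * δ * Z ≤ 1 / 2 := by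
    have : 0 ≤ δ * (‖ν‖ * B) := by positivity
    linarith
  have hδ1 : δ ≤ 1 := by
    have : 0 ≤ δ * (4 * B * Z + ‖ν‖ * B) := by positivity
    linarith
  have hδν : ‖ν‖ * (B * δ * δ) ≤ 1 := by
    have h1 : 0 ≤ δ * (4 * B * Z) := by positivity
    have h2 : ‖ν‖ * B * δ * δ ≤ ‖ν‖ * B * δ * 1 := by gcongr
    linarith
  have hskew : ∀ y z : V, ‖y‖ ≤ δ → ‖z‖ ≤ Z → ∀ v, ‖hh.skewOp y z v‖ ≤ ‖v‖ / 2 := by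
    intro y z hy hz v
    calc ‖hh.skewOp y z v‖ ≤ 2 * B * ‖y‖ * ‖z‖ * ‖v‖ := hh.norm_skewOp_le hB y z v
      _ ≤ 2 * B * δ * Z * ‖v‖ := by gcongr
      _ ≤ 1 / 2 * ‖v‖ := by gcongr
      _ = ‖v‖ / 2 := by ring
  have hcay : ∀ y, ‖y‖ ≤ δ → h y w₀ = 0 → h y w₁ = 0 → ∀ lamb, lamb ≠ 0 → ‖lamb‖ ≤ 1 →
      ∃ γ ∈ PadG E V h ∩ Metric.closedBall 0 3,
        (A lamb).comp (γ.comp (A lamb⁻¹)) ∈ PadH E V h w₀ ∧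
        (∀ v, ‖A lamb (γ (A lamb⁻¹ v))‖ ≤ 3 * ‖v‖) ∧
        (1 - ν * lamb * σ lamb * h y y) • A lamb (γ (A lamb⁻¹ w₁)) =
          (1 + ν * lamb * σ lamb * h y y) • w₁ - (2 * ν * σ lamb) • y := by
    intro y hy hy0 hy1 lamb hl hl1
    have hσl : σ lamb ≠ 0 := (map_ne_zero σ).mpr hl
    have hl2 : ‖lamb * σ lamb‖ ≤ 1 := by
      rw [norm_mul, hσ]; exact mul_le_one₀ hl1 (norm_nonneg _) hl1
    refine exists_conj_cayley hh hnd (hA _ hl) (hA _ (inv_ne_zero hl)) (hinv lamb hl) h01 h11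
      hy0 hy1 (hfix _ hl y hy0 hy1)
      (z := (2⁻¹ : E) • (w₀ + w₁) - (2⁻¹ : E) • (lamb * σ lamb) • (w₀ - w₁)) ?_
      (hskew _ _ hy ?_) (hskew _ _ hy ?_)
    · rw [map_sub, map_smul, map_smul, map_smul, hA1 _ hl, hA2 _ hl, smul_smul (lamb * σ lamb),
        mul_inv_cancel_right₀ hσl]
      module
    · refine (norm_sub_le _ _).trans ?_
      rw [norm_smul, norm_smul, norm_smul]
      have : ‖(2⁻¹ : E)‖ * (‖lamb * σ lamb‖ * ‖w₀ - w₁‖) ≤ ‖(2⁻¹ : E)‖ * ‖w₀ - w₁‖ := by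
        gcongr
        exact mul_le_of_le_one_left (norm_nonneg _) hl2
      simp only [Z]
      linarith [norm_nonneg w₁]
    · rw [norm_smul]
      have : ‖lamb‖ * ‖w₁‖ ≤ ‖w₁‖ := mul_le_of_le_one_left (norm_nonneg _) hl1
      have h3 : 0 ≤ ‖(2⁻¹ : E)‖ * ‖w₀ + w₁‖ + ‖(2⁻¹ : E)‖ * ‖w₀ - w₁‖ := by positivity
      simp only [Z]
      linarith
  obtain ⟨K, hK0, hK⟩ := exists_orthogonal_controls hh hB0 hB h10
    (by rw [h11]; exact neg_ne_zero.mpr hν) hδ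
  have h4ν : 0 < ‖4 * ν‖ := norm_pos_iff.mpr (mul_ne_zero (OfNat.ofNat_ne_zero 4) hν)
  refine ⟨K * (1 + 4 / ‖4 * ν‖), by positivity, fun g lamb hl hl1 => ?_⟩
  obtain ⟨y, hy0, hy1, hyδ, hy⟩ := hK g
  rcases le_total ‖g y‖ ‖g w₁‖ with hle | hle
  · obtain ⟨γ, hγ, hγH, hγ3, hγw⟩ := hcay 0 (by simpa using hδ.le) (hh.zero_left _)
      (hh.zero_left _) lamb hl hl1
    refine ⟨γ, hγ, hγH, hγ3, fun x hx => ?_⟩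
    simp only [hh.zero_left, mul_zero, sub_zero, add_zero, one_smul, smul_zero] at hγw
    rw [hγw]
    calc ‖lamb‖ * ‖g x‖ ≤ 1 * (K * ‖x‖ * ‖g w₁‖) := by
          gcongr
          exact hy x hx _ le_rfl hle
      _ ≤ (1 + 4 / ‖4 * ν‖) * (K * ‖x‖ * ‖g w₁‖) := by
          gcongr
          exact le_add_of_nonneg_right (by positivity)
      _ = K * (1 + 4 / ‖4 * ν‖) * ‖x‖ * ‖g w₁‖ := by ring
  · obtain ⟨γ, hγ, hγH, hγ3, hγw⟩ := hcay y hyδ hy0 hy1 lamb hl hl1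
    obtain ⟨γ', hγ', hγH', hγ3', hγw'⟩ := hcay ((-1 : E) • y) (by simpa [norm_smul] using hyδ)
      (by rw [hh.smul_left, hy0, mul_zero]) (by rw [hh.smul_left, hy1, mul_zero]) lamb hl hl1
    rw [hh.smul_left, hh.smul_right, map_neg, map_one] at hγw'
    have finish : ∀ k : V, ‖lamb‖ * ‖g y‖ ≤ 4 / ‖4 * ν‖ * ‖g k‖ →
        ∀ x, h x w₀ = 0 → ‖lamb‖ * ‖g x‖ ≤ K * (1 + 4 / ‖4 * ν‖) * ‖x‖ * ‖g k‖ := by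
      intro k hk x hx
      calc ‖lamb‖ * ‖g x‖ ≤ ‖lamb‖ * (K * ‖x‖ * ‖g y‖) := by
            gcongr
            exact hy x hx _ hle le_rfl
        _ = K * ‖x‖ * (‖lamb‖ * ‖g y‖) := by ring
        _ ≤ K * ‖x‖ * ((1 + 4 / ‖4 * ν‖) * ‖g k‖) := by
            refine mul_le_mul_of_nonneg_left ?_ (by positivity)
            linarith [norm_nonneg (g k)]
        _ = K * (1 + 4 / ‖4 * ν‖) * ‖x‖ * ‖g k‖ := by ring
    set k := A lamb (γ (A lamb⁻¹ w₁))
    set k' := A lamb (γ' (A lamb⁻¹ w₁))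
    have hdiff : (4 * ν * σ lamb) • g y =
        (1 - ν * lamb * σ lamb * h y y) • (g k' - g k) := by
      rw [← map_sub, ← map_smul, ← map_smul]
      congr 1
      linear_combination (norm := module) hγw - hγw'
    have ht : ‖1 - ν * lamb * σ lamb * h y y‖ ≤ 2 := by
      refine (norm_sub_le _ _).trans ?_
      rw [norm_mul, norm_mul, norm_mul, hσ, norm_one]
      have : ‖ν‖ * ‖lamb‖ * ‖lamb‖ * ‖h y y‖ ≤ ‖ν‖ * 1 * 1 * (B * δ * δ) := by
        gcongr
        exact (hB y y).trans (by gcongr)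
      linarith
    have hsum : ‖4 * ν‖ * (‖lamb‖ * ‖g y‖) ≤ 2 * (‖g k'‖ + ‖g k‖) := by
      rw [← mul_assoc, ← hσ lamb, ← norm_mul, ← norm_smul, hdiff, norm_smul]
      gcongr
      exact norm_sub_le _ _
    rcases le_total ‖g k'‖ ‖g k‖ with hkk | hkk
    · refine ⟨γ, hγ, hγH, hγ3, finish k ?_⟩
      rw [div_mul_eq_mul_div, le_div_iff₀ h4ν]
      linarith
    · refine ⟨γ', hγ', hγH', hγ3', finish k' ?_⟩
      rw [div_mul_eq_mul_div, le_div_iff₀ h4ν]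
      linarith

end Control

/-- for `l ≥ 1` there exist a compact subset `C₂ ⊆ G₀` and a constant
`c₀ ≥ 0` such that for every `h ∈ H` and every `λ ∈ O_E ∖ {0}` there is
`h' = h·(a(λ) γ a(λ)⁻¹)` with `γ ∈ C₂`, `a(λ) γ a(λ)⁻¹ ∈ H` and
`val_{R₁}(h'|_W) ≥ val_{R₁}(h'(w₁)) − val_E(λ) − c₀` (the valuation inequality being
encoded via the lattices `πE^n R₁`). -/
theorem stmt_10 (E : Type*) [NontriviallyNormedField E] [CompleteSpace E] [CharZero E]
    (hna : ∀ x y : E, ‖x + y‖ ≤ max ‖x‖ ‖y‖)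
    (hloc : IsCompact (Metric.closedBall (0 : E) 1))
    (πE : E) (hπ0 : πE ≠ 0) (hπ1 : ‖πE‖ < 1)
    (valE : E → ℤ) (hval : ∀ x : E, x ≠ 0 → ‖x‖ = ‖πE‖ ^ valE x) (hvalπ : valE πE = 1)
    (σ : E ≃+* E) (hσ2 : ∀ x : E, σ (σ x) = x) (hσnt : ∃ x : E, σ x ≠ x)
    (hσiso : ∀ x : E, ‖σ x‖ = ‖x‖)
    (V₀ : Type*) [NormedAddCommGroup V₀] [NormedSpace E V₀] [FiniteDimensional E V₀]
    (h : V₀ → V₀ → E)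
    (haddl : ∀ u u' v : V₀, h (u + u') v = h u v + h u' v)
    (hsmull : ∀ (a : E) (u v : V₀), h (a • u) v = a * h u v)
    (hconj : ∀ u v : V₀, h v u = σ (h u v))
    (hnd : ∀ u : V₀, (∀ v : V₀, h u v = 0) → u = 0)
    (ν₀ : E) (hν0 : ν₀ ≠ 0) (hνF : σ ν₀ = ν₀)
    (l : ℕ) (hl : 1 ≤ l) (w : ℕ → V₀)
    (horth : ∀ i ≤ l, ∀ j ≤ l, i ≠ j → h (w i) (w j) = 0)
    (hvalw : ∀ i ≤ l, h (w i) (w i) = (-1 : E) ^ i * ν₀)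
    (han : ∀ v ∈ PadVan E V₀ h l w, v ≠ 0 → h v v ≠ 0)
    (Rsharp : Set V₀)
    (hRsub : ∀ x ∈ Rsharp, h x (w 0) = 0 ∧ ∀ i : ℕ, 1 ≤ i → i ≤ l → h x (w i) = 0)
    (hRadd : ∀ x ∈ Rsharp, ∀ y ∈ Rsharp, x + y ∈ Rsharp)
    (hRsmul : ∀ c : E, ‖c‖ ≤ 1 → ∀ x ∈ Rsharp, c • x ∈ Rsharp)
    (hRspan : ∀ v : V₀, h v (w 0) = 0 → (∀ i : ℕ, 1 ≤ i → i ≤ l → h v (w i) = 0) →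
      ∃ c : E, c ≠ 0 ∧ c • v ∈ Rsharp)
    (hRbdd : ∃ C : ℝ, ∀ x ∈ Rsharp, ‖x‖ ≤ C)
    (aMap : E → (V₀ →L[E] V₀))
    (haG : ∀ lamb : E, lamb ≠ 0 → aMap lamb ∈ PadG E V₀ h)
    (ha1 : ∀ lamb : E, lamb ≠ 0 → aMap lamb (w 0 + w 1) = lamb • (w 0 + w 1))
    (ha2 : ∀ lamb : E, lamb ≠ 0 → aMap lamb (w 0 - w 1) = (σ lamb)⁻¹ • (w 0 - w 1))
    (ha3 : ∀ lamb : E, lamb ≠ 0 → ∀ v : V₀, h v (w 0 + w 1) = 0 → h v (w 0 - w 1) = 0 →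
      aMap lamb v = v) :
    ∃ (C₂ : Set (V₀ →L[E] V₀)) (c₀ : ℕ), C₂ ⊆ PadG E V₀ h ∧ IsCompact C₂ ∧
      ∀ g ∈ PadH E V₀ h (w 0), ∀ lamb : E, lamb ≠ 0 → ‖lamb‖ ≤ 1 →
        ∃ γ ∈ C₂,
          (aMap lamb).comp (γ.comp (aMap lamb⁻¹)) ∈ PadH E V₀ h (w 0) ∧
          ∀ n : ℤ,
            (∃ u ∈ PadR1 E V₀ l w Rsharp,
              (g.comp ((aMap lamb).comp (γ.comp (aMap lamb⁻¹)))) (w 1) = πE ^ n • u) →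
            ∀ v ∈ PadR1 E V₀ l w Rsharp,
              ∃ u ∈ PadR1 E V₀ l w Rsharp,
                (g.comp ((aMap lamb).comp (γ.comp (aMap lamb⁻¹)))) v =
                  πE ^ (n - valE lamb - (c₀ : ℤ)) • u := by
  have hh : IsHermitianForm σ h := ⟨haddl, hsmull, hconj⟩
  have : LocallyCompactSpace E := hloc.locallyCompactSpace_of_mem_nhds_of_addGroup (x := 0)
    (Metric.closedBall_mem_nhds 0 one_pos)
  have : ProperSpace V₀ := FiniteDimensional.proper E V₀
  have : ProperSpace (V₀ →L[E] V₀) := FiniteDimensional.proper E _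
  obtain ⟨K, hK0, hK⟩ := exists_conj_controls hh hσiso hnd hν0
    (by simpa using hvalw 0 (Nat.zero_le l)) (by simpa using hvalw 1 hl)
    (horth 0 (Nat.zero_le l) 1 hl zero_ne_one) haG ha1 ha2 ha3
  obtain ⟨C, hC0, hC⟩ := exists_norm_le_of_mem_PadR1 (E := E) (l := l) (w := w) hRbdd
  obtain ⟨ε, hε, hball⟩ := exists_ball_subset_PadR1 hh horth
    (fun i hi => by rw [hvalw i hi]; exact mul_ne_zero (pow_ne_zero _ (by simp)) hν0)
    hRadd hRsmul hRspan
  have hπpos : 0 < ‖πE‖ := norm_pos_iff.mpr hπ0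
  obtain ⟨c₀, hc₀⟩ : ∃ c₀ : ℕ, K * (3 * C) * C * ‖πE‖ ^ c₀ ≤ ε := by
    have ht := (tendsto_pow_atTop_nhds_zero_of_lt_one hπpos.le hπ1).const_mul (K * (3 * C) * C)
    rw [mul_zero] at ht
    obtain ⟨c₀, hc₀⟩ := (ht.eventually (gt_mem_nhds hε)).exists
    exact ⟨c₀, hc₀.le⟩
  refine ⟨PadG E V₀ h ∩ Metric.closedBall 0 3, c₀, Set.inter_subset_left,
    isCompact_PadG_inter_closedBall hh hσiso hnd 3, fun g hg lamb hlamb hlamb1 => ?_⟩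
  obtain ⟨γ, hγ, hγH, hγ3, hγg⟩ := hK g lamb hlamb hlamb1
  refine ⟨γ, hγ, hγH, ?_⟩
  rintro n ⟨u, hu, hun⟩ v hv
  have horthW : ∀ f ∈ PadH E V₀ h (w 0), ∀ x, h x (w 0) = 0 → h (f x) (w 0) = 0 := by
    intro f hf x hx
    have := hf.1.2 x (w 0)
    rwa [hf.2, hx] at this
  have hv0 : h v (w 0) = 0 := by
    obtain ⟨b, -, x, hx, rfl⟩ := hv
    rw [hh.add_left, (hRsub x hx).1, hh.sum_left, add_zero]
    refine Finset.sum_eq_zero fun i hi => ?_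
    rw [Finset.mem_Icc] at hi
    rw [hh.smul_left, horth i hi.2 0 (Nat.zero_le l) (by omega), mul_zero]
  have hkv0 := horthW _ hγH v hv0
  have hgkv0 := horthW g hg _ hkv0
  have hpow : πE ^ (n - valE lamb - (c₀ : ℤ)) ≠ 0 := zpow_ne_zero _ hπ0
  refine ⟨(πE ^ (n - valE lamb - (c₀ : ℤ)))⁻¹ •
    (g.comp ((aMap lamb).comp (γ.comp (aMap lamb⁻¹)))) v, hball _ ?_ ?_,
    (smul_inv_smul₀ hpow _).symm⟩
  · rw [hh.smul_left]
    exact mul_eq_zero_of_right _ hgkv0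
  · have hw1 : ‖g (aMap lamb (γ (aMap lamb⁻¹ (w 1))))‖ ≤ ‖πE‖ ^ n * C := by
      have hun' : g (aMap lamb (γ (aMap lamb⁻¹ (w 1)))) = πE ^ n • u := hun
      rw [hun', norm_smul, norm_zpow]
      gcongr
      exact hC u hu
    have hkey : ‖lamb‖ * ‖g (aMap lamb (γ (aMap lamb⁻¹ v)))‖ ≤ K * (3 * C) * (‖πE‖ ^ n * C) := by
      refine (hγg _ hkv0).trans ?_
      gcongr
      exact (hγ3 v).trans (by gcongr; exact hC v hv)
    rw [hval lamb hlamb] at hkey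
    have hexp : ‖πE‖ ^ (n - valE lamb - (c₀ : ℤ)) * ‖πE‖ ^ valE lamb * ‖πE‖ ^ c₀ = ‖πE‖ ^ n := by
      rw [← zpow_natCast, ← zpow_add₀ hπpos.ne', ← zpow_add₀ hπpos.ne']
      congr 1
      ring
    rw [norm_smul, norm_inv, norm_zpow, inv_mul_le_iff₀ (zpow_pos hπpos _)]
    refine le_of_mul_le_mul_left (hkey.trans ?_) (zpow_pos hπpos (valE lamb))
    rw [← hexp]
    calc _ = ‖πE‖ ^ valE lamb * (‖πE‖ ^ (n - valE lamb - (c₀ : ℤ)) *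
          (K * (3 * C) * C * ‖πE‖ ^ c₀)) := by ring
      _ ≤ _ := by gcongr
end
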